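/- Let V = V₀ + V₁ where V₀ ∈ L^∞(ℝ) and V₁ is a signed Radon measure on ℝ with finite total variation, and let u ∈ H¹(ℝ). Then lim_{h→0} I(u(·−h);V) = I(u;V), where u(·−h) denotes the translate x ↦ u(x−h). -/

import Mathlib

open MeasureTheory Filter Real Topology

/-- The supremum norm `‖u‖_∞` of a (bounded continuous) function `u : ℝ → ℝ`. -/
noncomputable def supNorm (u : ℝ → ℝ) : ℝ := ⨆ x : ℝ, |u x|

/-- `u` is (the continuous representative of) an element of `H¹(ℝ)`:
`u` is continuous, `u ∈ L²(ℝ)`, and there is a weak derivative `u' ∈ L²(ℝ)`,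
i.e. `u x = u 0 + ∫_0^x u'`. -/
def IsH1 (u : ℝ → ℝ) : Prop :=
  Continuous u ∧ MemLp u 2 (volume : Measure ℝ) ∧
    ∃ u' : ℝ → ℝ, MemLp u' 2 (volume : Measure ℝ) ∧
      ∀ x : ℝ, u x = u 0 + ∫ t in (0:ℝ)..x, u' t

/-- The Dirichlet energy `∫_ℝ |u'(x)|² dx`.  (For `u ∈ H¹(ℝ)` the classical
derivative `deriv u` exists a.e. and coincides a.e. with the weak derivative.) -/
noncomputable def energy (u : ℝ → ℝ) : ℝ := ∫ x : ℝ, (deriv u x) ^ 2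

/-- Integral of `f` against a finite signed Radon measure `μ`, via its Jordan
decomposition `μ = μ₊ - μ₋`. -/
noncomputable def sMeasInt (μ : SignedMeasure ℝ) (f : ℝ → ℝ) : ℝ :=
  (∫ x, f x ∂μ.toJordanDecomposition.posPart) -
    (∫ x, f x ∂μ.toJordanDecomposition.negPart)

/-- `I(u;V)` for a generalized potential `V = V₀ + V₁` with `V₀ ∈ L^∞(ℝ)` and
`V₁` a finite signed Radon measure:
`I(u;V) = ∫_ℝ (|u'|² + V₀|u|²) dx + ∫_ℝ |u|² dV₁`. -/
noncomputable def Itot (V₀ : ℝ → ℝ) (V₁ : SignedMeasure ℝ) (u : ℝ → ℝ) : ℝ :=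
  (∫ x : ℝ, ((deriv u x) ^ 2 + V₀ x * (u x) ^ 2)) + sMeasInt V₁ (fun x => (u x) ^ 2)

/-! The kinetic energy is translation invariant, so only the two potential terms depend on `h`. For
`V₀`, translation is continuous in `L¹` and pairing with `V₀ ∈ L^∞` is a bounded functional on `L¹`.
Since `V₁` may charge points, its term needs pointwise control instead: `H¹(ℝ) ⊆ L^∞(ℝ)`, and
dominated convergence applies because `V₁` is finite. -/

section Translation

variable {G E F H : Type*} [TopologicalSpace G] [AddGroup G]
  [NormedAddCommGroup E] [NormedAddCommGroup F] [NormedAddCommGroup H]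

theorem continuous_integral_comp_sub_of_bounded [ContinuousSub G] [FirstCountableTopology G]
    [MeasurableSpace G] [OpensMeasurableSpace G] [SecondCountableTopologyEither G E]
    [NormedSpace ℝ E] (μ : Measure G) [IsFiniteMeasure μ] {f : G → E} {C : ℝ}
    (hf : Continuous f) (hC : ∀ x, ‖f x‖ ≤ C) :
    Continuous fun h => ∫ x, f (x - h) ∂μ :=
  continuous_of_dominated (bound := fun _ => C)
    (fun _ => (hf.comp (continuous_id.sub continuous_const)).aestronglyMeasurable)
    (fun h => .of_forall fun x => hC (x - h)) (integrable_const C)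
    (.of_forall fun _ => hf.comp (continuous_const.sub continuous_id))

variable [IsTopologicalAddGroup G] [MeasurableSpace G] [BorelSpace G]
  {μ : Measure G} [μ.IsAddRightInvariant] [IsLocallyFiniteMeasure μ] [μ.InnerRegularCompactLTTop]

theorem continuous_toLp_comp_sub {p : ENNReal} [Fact (1 ≤ p)] (hp : p ≠ ⊤)
    {f : G → E} (hf : MemLp f p μ) :
    Continuous fun h => (hf.comp_measurePreserving (measurePreserving_sub_right μ h)).toLp := by
  let shift : C(G, C(G, G)) := ContinuousMap.curry ⟨fun z => z.2 - z.1, by fun_prop⟩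
  exact (continuous_const (y := hf.toLp)).compMeasurePreservingLp shift.continuous
    (measurePreserving_sub_right μ) hp

theorem continuous_integral_bilin_comp_sub {𝕜 : Type*} [RCLike 𝕜] [NormedSpace 𝕜 E]
    [NormedSpace 𝕜 F] [NormedSpace 𝕜 H] [NormedSpace ℝ H] [SMulCommClass ℝ 𝕜 H] [CompleteSpace H]
    (B : E →L[𝕜] F →L[𝕜] H) {p q : ENNReal} [p.HolderConjugate q] (hq : q ≠ ⊤)
    {f : G → E} {g : G → F} (hf : MemLp f p μ) (hg : MemLp g q μ) :
    Continuous fun h => ∫ x, B (f x) (g (x - h)) ∂μ := by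
  have : Fact (1 ≤ p) := ⟨ENNReal.HolderConjugate.one_le p q⟩
  have : Fact (1 ≤ q) := ⟨ENNReal.HolderConjugate.one_le q p⟩
  refine ((B.lpPairing μ p q hf.toLp).continuous.comp (continuous_toLp_comp_sub hq hg)).congr
    fun h => ?_
  rw [Function.comp_apply, ContinuousLinearMap.lpPairing_eq_integral]
  refine integral_congr_ae ?_
  filter_upwards [hf.coeFn_toLp,
    (hg.comp_measurePreserving (measurePreserving_sub_right μ h)).coeFn_toLp] with x hfx hgx
  rw [hfx, hgx, Function.comp_apply]

end Translation

section Primitive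

variable {E : Type*} [NormedAddCommGroup E] {u u' : ℝ → E} {a : ℝ}

theorem intervalIntegrable_of_locallyIntegrable {f : ℝ → E} {μ : Measure ℝ}
    (hf : LocallyIntegrable f μ) (a b : ℝ) : IntervalIntegrable f μ a b :=
  (hf.integrableOn_isCompact isCompact_uIcc).intervalIntegrable

theorem integral_norm_unit_interval_le_lpNorm {p : ENNReal} (hp : 1 ≤ p) {f : ℝ → E}
    (hf : MemLp f p) (x : ℝ) : ∫ y in x..x + 1, ‖f y‖ ≤ lpNorm f p volume := by
  have : IsProbabilityMeasure (volume.restrict (Set.Ioc x (x + 1))) := ⟨by simp⟩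
  have hf_meas := hf.aestronglyMeasurable
  rw [intervalIntegral.integral_of_le (by linarith), ← lpNorm_one_eq_integral_norm hf_meas.restrict,
    ← toReal_eLpNorm hf_meas.restrict, ← toReal_eLpNorm hf_meas]
  refine ENNReal.toReal_mono hf.eLpNorm_ne_top ?_
  calc eLpNorm f 1 (volume.restrict (Set.Ioc x (x + 1)))
      ≤ eLpNorm f p (volume.restrict (Set.Ioc x (x + 1))) :=
        eLpNorm_le_eLpNorm_of_exponent_le hp hf_meas.restrict
    _ ≤ eLpNorm f p volume := eLpNorm_restrict_le f p volume _

variable [NormedSpace ℝ E]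

theorem sub_eq_intervalIntegral_of_eq_add (hu' : LocallyIntegrable u')
    (hu : ∀ x, u x = u a + ∫ t in a..x, u' t) (x y : ℝ) :
    u y - u x = ∫ t in x..y, u' t := by
  have hu'_int := intervalIntegrable_of_locallyIntegrable hu'
  rw [hu y, hu x, add_sub_add_left_eq_sub,
    intervalIntegral.integral_interval_sub_left (hu'_int a y) (hu'_int a x)]

theorem deriv_ae_eq_of_eq_add_intervalIntegral [CompleteSpace E] (hu' : LocallyIntegrable u')
    (hu : ∀ x, u x = u a + ∫ t in a..x, u' t) : deriv u =ᵐ[volume] u' := by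
  filter_upwards [LocallyIntegrable.ae_hasDerivAt_integral hu'] with x hx
  rw [funext hu]
  exact ((hx a).const_add (u a)).deriv

theorem norm_le_integral_norm_add_integral_norm (hu' : LocallyIntegrable u')
    (hu : ∀ x, u x = u a + ∫ t in a..x, u' t) (x : ℝ) :
    ‖u x‖ ≤ (∫ y in x..x + 1, ‖u y‖) + ∫ y in x..x + 1, ‖u' y‖ := by
  have hu'_int := intervalIntegrable_of_locallyIntegrable hu'
  have hu_cont : Continuous u := by
    rw [funext hu]
    exact continuous_const.add (intervalIntegral.continuous_primitive hu'_int a)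
  have hu_int := hu_cont.intervalIntegrable (μ := volume) x (x + 1)
  have pointwise : ∀ y ∈ Set.Icc x (x + 1), ‖u x‖ ≤ ‖u y‖ + ∫ t in x..x + 1, ‖u' t‖ := by
    intro y hy
    calc ‖u x‖ ≤ ‖u y‖ + ‖u y - u x‖ := norm_le_norm_add_norm_sub _ _
      _ ≤ ‖u y‖ + ∫ t in x..y, ‖u' t‖ := by
        rw [sub_eq_intervalIntegral_of_eq_add hu' hu]
        gcongr
        exact intervalIntegral.norm_integral_le_integral_norm hy.1
      _ ≤ ‖u y‖ + ∫ t in x..x + 1, ‖u' t‖ := by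
        gcongr
        exact intervalIntegral.integral_mono_interval le_rfl hy.1 hy.2
          (.of_forall fun _ => norm_nonneg _) (hu'_int x (x + 1)).norm
  calc ‖u x‖ = ∫ _ in x..x + 1, ‖u x‖ := by simp
    _ ≤ ∫ y in x..x + 1, (‖u y‖ + ∫ t in x..x + 1, ‖u' t‖) :=
      intervalIntegral.integral_mono_on (by linarith) intervalIntegrable_const
        (hu_int.norm.add intervalIntegrable_const) pointwise
    _ = (∫ y in x..x + 1, ‖u y‖) + ∫ y in x..x + 1, ‖u' y‖ := by
      rw [intervalIntegral.integral_add hu_int.norm intervalIntegrable_const]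
      simp

theorem norm_le_lpNorm_add_lpNorm {p q : ENNReal} (hp : 1 ≤ p) (hq : 1 ≤ q) (hu_Lp : MemLp u p)
    (hu'_Lq : MemLp u' q) (hu : ∀ x, u x = u a + ∫ t in a..x, u' t) (x : ℝ) :
    ‖u x‖ ≤ lpNorm u p volume + lpNorm u' q volume :=
  (norm_le_integral_norm_add_integral_norm (hu'_Lq.locallyIntegrable hq) hu x).trans <|
    add_le_add (integral_norm_unit_interval_le_lpNorm hp hu_Lp x)
      (integral_norm_unit_interval_le_lpNorm hq hu'_Lq x)

end Primitive

theorem energy_comp_sub (u : ℝ → ℝ) (h : ℝ) : energy (fun x => u (x - h)) = energy u := by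
  simp only [energy, deriv_comp_sub_const]
  exact integral_sub_right_eq_self (fun x => deriv u x ^ 2) h

theorem continuous_sMeasInt_comp_sub (μ : SignedMeasure ℝ) {f : ℝ → ℝ} {C : ℝ}
    (hf : Continuous f) (hC : ∀ x, ‖f x‖ ≤ C) :
    Continuous fun h => sMeasInt μ (fun x => f (x - h)) :=
  (continuous_integral_comp_sub_of_bounded _ hf hC).sub
    (continuous_integral_comp_sub_of_bounded _ hf hC)

namespace IsH1

variable {u : ℝ → ℝ}

theorem exists_abs_le (hu : IsH1 u) : ∃ C, ∀ x, |u x| ≤ C := by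
  obtain ⟨-, hu_L2, u', hu'_L2, hu_eq⟩ := hu
  exact ⟨_, norm_le_lpNorm_add_lpNorm one_le_two one_le_two hu_L2 hu'_L2 hu_eq⟩

theorem memLp_deriv (hu : IsH1 u) : MemLp (deriv u) 2 := by
  obtain ⟨-, -, u', hu'_L2, hu_eq⟩ := hu
  exact hu'_L2.ae_eq
    (deriv_ae_eq_of_eq_add_intervalIntegral (hu'_L2.locallyIntegrable one_le_two) hu_eq).symm

theorem comp_sub (hu : IsH1 u) (h : ℝ) : IsH1 fun x => u (x - h) := by
  obtain ⟨hu_cont, hu_L2, u', hu'_L2, hu_eq⟩ := hu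
  have shift := measurePreserving_sub_right (volume : Measure ℝ) h
  refine ⟨by fun_prop, hu_L2.comp_measurePreserving shift, fun x => u' (x - h),
    hu'_L2.comp_measurePreserving shift, fun x => ?_⟩
  rw [intervalIntegral.integral_comp_sub_right, ← sub_eq_intervalIntegral_of_eq_add
    (hu'_L2.locallyIntegrable one_le_two) hu_eq, add_sub_cancel]

theorem Itot_eq (hu : IsH1 u) {V₀ : ℝ → ℝ} (hV₀ : MemLp V₀ ⊤) (V₁ : SignedMeasure ℝ) :
    Itot V₀ V₁ u = energy u + (∫ x, V₀ x * u x ^ 2) + sMeasInt V₁ (fun x => u x ^ 2) := by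
  have hV₀_int : Integrable fun x => V₀ x * u x ^ 2 := hu.2.1.integrable_sq.mul_of_top_right hV₀
  rw [Itot, energy, integral_add hu.memLp_deriv.integrable_sq hV₀_int]

end IsH1

/-- **Continuity of `I(·;V)` under translations.** For `V = V₀ + V₁` with `V₀ ∈ L^∞(ℝ)`
and `V₁` a finite signed Radon measure, and `u ∈ H¹(ℝ)`:
`I(u(·-h);V) → I(u;V)` as `h → 0`. -/
theorem Itot_translate_continuous (V₀ : ℝ → ℝ) (hV₀ : MemLp V₀ ⊤ (volume : Measure ℝ))
    (V₁ : SignedMeasure ℝ) (u : ℝ → ℝ) (hu : IsH1 u) :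
    Filter.Tendsto (fun h : ℝ => Itot V₀ V₁ (fun x => u (x - h))) (𝓝 0)
      (𝓝 (Itot V₀ V₁ u)) := by
  obtain ⟨C, hC⟩ := hu.exists_abs_le
  have decomposition (h : ℝ) : Itot V₀ V₁ (fun x => u (x - h)) =
      energy u + (∫ x, V₀ x * u (x - h) ^ 2) + sMeasInt V₁ (fun x => u (x - h) ^ 2) := by
    rw [(hu.comp_sub h).Itot_eq hV₀, energy_comp_sub]
  have hV₀_cont : Continuous fun h => ∫ x, V₀ x * u (x - h) ^ 2 :=
    continuous_integral_bilin_comp_sub (ContinuousLinearMap.mul ℝ ℝ) ENNReal.one_ne_top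
      hV₀ (memLp_one_iff_integrable.2 hu.2.1.integrable_sq)
  have hV₁_cont : Continuous fun h => sMeasInt V₁ (fun x => u (x - h) ^ 2) :=
    continuous_sMeasInt_comp_sub V₁ (hu.1.pow 2) fun x =>
      (norm_pow (u x) 2).trans_le (pow_le_pow_left₀ (norm_nonneg _) (hC x) 2)
  have hItot_cont : Continuous fun h => Itot V₀ V₁ (fun x => u (x - h)) := by
    simp only [decomposition]
    exact (continuous_const.add hV₀_cont).add hV₁_cont
  simpa only [sub_zero] using hItot_cont.tendsto 0
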